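/- Let p be a prime with p ≡ 1 (mod 8) such that (2/p)₄ = (p/2)₄ = −1, k = ℚ(√(2p), i), and let H be the prime ideal of O_k above 1+i. Then the class [H] has order 2 in Cl(k), and [H] is a square in Cl(k): there exists σ ∈ Cl(k) of order 4 with σ² = [H]. -/

import Mathlib

/-!
Write `ω = √(ip) = (1 + i)√(2p)/2 ∈ k`.

*`[H]` is a square.* The hypotheses say that `1 + i` is a square modulo both primes of `ℤ[i]` above
`p`, i.e. that `H` lies in the principal genus of `k / ℚ(i)`. This is made explicit by solving
`x² - (1+i) z² = i p` in `ℤ[i]` (`exists_form_eq`): if `a² ≡ 1 + i (mod p)`, reduction theory of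
the Hermitian form `2|x|² + 3|z|²` on the lattice `x ≡ a z (mod p)` (`exists_short`) gives a
nonzero vector with `x² - (1+i) z² = m p` and `|m|² ≤ 3`; such an `m` is, like `i`, a relative norm
from `ℤ[i][√(1+i)]`, so it can be replaced by `i`. Then `(x - ω)(x + ω) = (1+i) z²`,
both factors lie in `H`, and after division by `H` they become coprime with product `(z)²`; hence
`(x - ω) = H A²` (`exists_ideal_sq`) and `σ = [A]⁻¹` satisfies `σ² = [H]`.

*`[H] ≠ 1`.* If `H = (h)`, then `h² = ε (1 + i)` with a unit `ε`, and `h h̄ = a + b√(2p)` has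
`a, b ∈ ℤ` and norm `a² - 2 p b² = ±2`, where the sign is `+` because `h h̄` is totally positive
(`not_sq_eq_unit_mul`). So `2 x² - p y² = 1` has an integral solution. But then `2` is a square
modulo `y`, so `y² ≡ 1 (mod 16)`, and `p ≡ 9 (mod 16)` yields `x² ≡ 5 (mod 8)`, a contradiction
(`no_sol_two_sq_sub_mul_sq`).
-/

/- STATEMENT 19: Let p ≡ 1 (mod 8) be prime with (2/p)₄ = (p/2)₄ = −1, k = ℚ(√(2p), i),
H the prime of O_k above 1+i (H² = (1+i)O_k). Then the class [H] has order 2 in Cl(k)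
and [H] is a square: there is σ ∈ Cl(k) of order 4 with σ² = [H]. -/

open Complex NumberField IntermediateField Polynomial nonZeroDivisors

noncomputable section

lemma integral_of_pow_rat {x : ℂ} {n : ℕ} (hn : n ≠ 0) {q : ℚ} (h : x ^ n = (q : ℂ)) :
    IsIntegral ℚ x := by
  refine ⟨X ^ n - C q, monic_X_pow_sub_C q hn, ?_⟩
  simp [h]

/-- k = ℚ(√(2p), i) as a subfield of ℂ. -/
def kfield (p : ℕ) : IntermediateField ℚ ℂ := ℚ⟮(Real.sqrt (2 * p) : ℂ), (Complex.I : ℂ)⟯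

instance (p : ℕ) : FiniteDimensional ℚ (kfield p) := by
  apply IntermediateField.finiteDimensional_adjoin
  rintro x hx
  simp only [Set.mem_insert_iff, Set.mem_singleton_iff] at hx
  rcases hx with rfl | rfl
  · refine integral_of_pow_rat two_ne_zero (q := 2 * p) ?_
    push_cast
    norm_cast
    exact_mod_cast Real.sq_sqrt (by positivity)
  · exact integral_of_pow_rat two_ne_zero (q := -1) (by simp [Complex.I_sq])

instance (p : ℕ) : NumberField (kfield p) := ⟨⟩

/-! ### Arithmetic of `2 x² - p y² = 1` -/

/-- Primes dividing `y` split in `ℚ(√2)`, so `y² ≡ 1 (mod 16)`; with `p ≡ 9 (mod 16)` this forces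
`x² ≡ 5 (mod 8)`. -/
lemma no_sol_two_sq_sub_mul_sq {p : ℕ} (hp16 : p % 16 = 9) (x y : ℤ) :
    2 * x ^ 2 - p * y ^ 2 ≠ 1 := by
  intro h
  have hpo : (p : ℤ) % 16 = 9 := by exact_mod_cast hp16
  have hy : Odd y.natAbs := by
    rw [Int.natAbs_odd]
    by_contra hy
    obtain ⟨t, rfl⟩ := Int.not_odd_iff_even.mp hy
    have : 2 * (x ^ 2 - p * (2 * t ^ 2)) = 1 := by linarith
    omega
  have hmod : (2 * x ^ 2) % (y.natAbs : ℤ) = 1 % (y.natAbs : ℤ) := by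
    apply Int.ModEq.symm
    rw [Int.modEq_iff_dvd, Int.natAbs_dvd]
    exact ⟨p * y, by linarith⟩
  have hcop : x.gcd y.natAbs = 1 := by
    rw [← Int.isCoprime_iff_gcd_eq_one]
    have : IsCoprime x y := ⟨2 * x, -(p * y), by linarith⟩
    rcases Int.natAbs_eq y with hh | hh
    · rwa [← hh]
    · rw [hh] at this
      exact IsCoprime.neg_right_iff _ _ |>.mp this
  have hJ : jacobiSym 2 y.natAbs = 1 := by
    have h1 : jacobiSym (2 * x ^ 2) y.natAbs = 1 := by
      rw [jacobiSym.mod_left, hmod, ← jacobiSym.mod_left, jacobiSym.one_left]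
    rwa [jacobiSym.mul_left, jacobiSym.sq_one' hcop, mul_one] at h1
  rw [jacobiSym.at_two hy, ZMod.χ₈_nat_eq_if_mod_eight] at hJ
  have hy8 : y % 8 = 1 ∨ y % 8 = 7 := by
    split_ifs at hJ <;> omega
  have hy16 : y ^ 2 % 16 = 1 := by
    have h3 : y % 16 = 1 ∨ y % 16 = 7 ∨ y % 16 = 9 ∨ y % 16 = 15 := by omega
    rcases h3 with h3 | h3 | h3 | h3 <;> simp [pow_two, Int.mul_emod, h3]
  have hpy : (p * y ^ 2 : ℤ) % 16 = 9 := by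
    rw [Int.mul_emod, hpo, hy16]; rfl
  have hx8 : x ^ 2 % 8 = 5 := by omega
  have h4 : x % 8 = 0 ∨ x % 8 = 1 ∨ x % 8 = 2 ∨ x % 8 = 3 ∨ x % 8 = 4 ∨ x % 8 = 5 ∨
      x % 8 = 6 ∨ x % 8 = 7 := by omega
  rcases h4 with h4 | h4 | h4 | h4 | h4 | h4 | h4 | h4 <;>
    simp [pow_two, Int.mul_emod, h4] at hx8

/-! ### A square root of `1 + i` modulo `p` -/

lemma isSquare_one_add_of_sq_eq_neg_one {p : ℕ} [Fact p.Prime] (hp8 : p % 8 = 1)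
    (h2p4 : (2 : ZMod p) ^ ((p - 1) / 4) = -1) (hodd : Odd ((p - 1) / 8))
    (j : ZMod p) (hj : j ^ 2 = -1) : IsSquare (1 + j) := by
  have h2 : (2 : ZMod p) ≠ 0 := by
    intro h
    rw [h, zero_pow (by have := (Fact.out : p.Prime).two_le; omega)] at h2p4
    exact one_ne_zero (neg_eq_zero.mp h2p4.symm)
  have hsq : (1 + j) ^ 2 = 2 * j := by linear_combination hj
  have hne : 1 + j ≠ 0 := by
    intro h
    have hj0 : j = 0 := by
      have := hsq
      rw [h] at this
      simpa [h2] using this.symm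
    simp [hj0] at hj
  rw [ZMod.euler_criterion p hne]
  have e1 : p / 2 = 2 * ((p - 1) / 4) := by omega
  have e2 : (p - 1) / 4 = 2 * ((p - 1) / 8) := by omega
  rw [e1, pow_mul, hsq, mul_pow, h2p4, e2, pow_mul, hj, hodd.neg_one_pow]
  norm_num

/-- Writing `1 + j = r²`, `1 - j = s²` in `𝔽_p` with `j² = -1`, the element
`(r + s)/2 + i (r - s)/(2j)` is a square root of `1 + i` modulo `p`. -/
lemma exists_sqrt_one_add_i {p : ℕ} (hp : p.Prime) (hp8 : p % 8 = 1)
    (h2p4 : (2 : ZMod p) ^ ((p - 1) / 4) = -1) (hodd : Odd ((p - 1) / 8)) :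
    ∃ c d : ℤ, (p : ℤ) ∣ c ^ 2 - d ^ 2 - 1 ∧ (p : ℤ) ∣ 2 * (c * d) - 1 := by
  have : Fact p.Prime := ⟨hp⟩
  have h2 : (2 : ZMod p) ≠ 0 := by
    intro h
    rw [h, zero_pow (by have := hp.two_le; omega)] at h2p4
    exact one_ne_zero (neg_eq_zero.mp h2p4.symm)
  obtain ⟨j, hj⟩ : IsSquare (-1 : ZMod p) := ZMod.exists_sq_eq_neg_one_iff.mpr (by omega)
  have hj2 : j ^ 2 = -1 := by rw [hj]; ring
  have hj0 : j ≠ 0 := by rintro rfl; simp at hj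
  obtain ⟨r, hr⟩ := isSquare_one_add_of_sq_eq_neg_one hp8 h2p4 hodd j hj2
  obtain ⟨s, hs⟩ := isSquare_one_add_of_sq_eq_neg_one hp8 h2p4 hodd (-j) (by rw [neg_sq, hj2])
  obtain ⟨c, hc⟩ := ZMod.intCast_surjective ((r + s) / 2)
  obtain ⟨d, hd⟩ := ZMod.intCast_surjective ((r - s) / (2 * j))
  refine ⟨c, d, ?_, ?_⟩
  · rw [← ZMod.intCast_zmod_eq_zero_iff_dvd]
    push_cast
    rw [hc, hd]
    field_simp
    linear_combination ((r + s) ^ 2 - 4) * hj2 + 2 * (hr + hs)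
  · rw [← ZMod.intCast_zmod_eq_zero_iff_dvd]
    push_cast
    rw [hc, hd]
    field_simp
    linear_combination hs - hr

/-! ### Reduction of a binary Hermitian form over `ℤ[i]` -/

lemma gauss_norm (x : GaussianInt) : x.norm = x.re ^ 2 + x.im ^ 2 := by
  rw [Zsqrtd.norm_def]; ring

/-- Rounding to the nearest Gaussian integer. -/
lemma exists_round (b : GaussianInt) {n : ℤ} (hn : 0 < n) :
    ∃ q : GaussianInt, 2 * (b - q * (n : GaussianInt)).norm ≤ n ^ 2 := by
  have key : ∀ t : ℤ, ∃ q : ℤ, 4 * (t - q * n) ^ 2 ≤ n ^ 2 := by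
    intro t
    refine ⟨(2 * t + n) / (2 * n), ?_⟩
    have h1 := Int.emod_add_mul_ediv (2 * t + n) (2 * n)
    have h2 := Int.emod_nonneg (2 * t + n) (b := 2 * n) (by omega)
    have h3 := Int.emod_lt_of_pos (2 * t + n) (b := 2 * n) (by omega)
    set q := (2 * t + n) / (2 * n)
    have : (2 * (t - q * n)) ^ 2 ≤ n ^ 2 := by
      apply sq_le_sq'
      · linarith
      · linarith
    linarith
  obtain ⟨q1, h1⟩ := key b.re
  obtain ⟨q2, h2⟩ := key b.im
  refine ⟨⟨q1, q2⟩, ?_⟩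
  rw [gauss_norm]
  simp
  linarith

/-- The Hermitian form `2|x|² + 3|z|²`; half of it bounds `|x² - (1+i) z²|` from above. -/
def hForm (x z : GaussianInt) : ℤ := 2 * x.norm + 3 * z.norm

lemma hForm_nonneg (x z : GaussianInt) : 0 ≤ hForm x z := by
  have := GaussianInt.norm_nonneg x
  have := GaussianInt.norm_nonneg z
  unfold hForm; positivity

lemma hForm_pos {x z : GaussianInt} (h : ¬ (x = 0 ∧ z = 0)) : 0 < hForm x z := by
  have hx := GaussianInt.norm_nonneg x
  have hz := GaussianInt.norm_nonneg z
  rcases (hForm_nonneg x z).lt_or_eq with h1 | h1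
  · exact h1
  · exfalso
    unfold hForm at h1
    exact h ⟨GaussianInt.norm_eq_zero.mp (by omega), GaussianInt.norm_eq_zero.mp (by omega)⟩

lemma hForm_mul (g x z : GaussianInt) : hForm (g * x) (g * z) = g.norm * hForm x z := by
  simp only [hForm, Zsqrtd.norm_mul]; ring

/-- Lagrange's identity for the Hermitian form. -/
lemma hForm_lagrange (x z x' z' : GaussianInt) :
    hForm x z * hForm x' z' =
      (2 * x' * star x + 3 * z' * star z).norm + 6 * (x * z' - z * x').norm := by
  have r3 : ((3 : GaussianInt)).re = 3 := rfl
  have i3 : ((3 : GaussianInt)).im = 0 := rfl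
  have r2 : ((2 : GaussianInt)).re = 2 := rfl
  have i2 : ((2 : GaussianInt)).im = 0 := rfl
  simp only [hForm, gauss_norm, Zsqrtd.re_add, Zsqrtd.im_add, Zsqrtd.re_mul, Zsqrtd.im_mul,
    Zsqrtd.re_sub, Zsqrtd.im_sub, Zsqrtd.re_star, Zsqrtd.im_star, r2, i2, r3, i3]
  ring

/-- A nonzero vector `(x, z)` of the lattice `x ≡ a z (mod p)` with `hForm x z ≤ √12 p`. -/
lemma exists_short (p : ℕ) (hp : 0 < p) (a : GaussianInt) :
    ∃ x z : GaussianInt, ¬ (x = 0 ∧ z = 0) ∧ (p : GaussianInt) ∣ x - a * z ∧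
      hForm x z ^ 2 ≤ 12 * (p : ℤ) ^ 2 := by
  classical
  have hp0 : (p : GaussianInt) ≠ 0 := by exact_mod_cast hp.ne'
  let P : ℕ → Prop := fun n => ∃ x z : GaussianInt, ¬ (x = 0 ∧ z = 0) ∧
    (p : GaussianInt) ∣ x - a * z ∧ hForm x z = n
  have hP : ∃ n, P n := by
    refine ⟨(hForm p 0).toNat, p, 0, by simp [hp0], by simp, ?_⟩
    rw [Int.toNat_of_nonneg (hForm_nonneg _ _)]
  obtain ⟨x, z, hxz, hdvd, hval⟩ := Nat.find_spec hP
  have hmin : ∀ x' z' : GaussianInt, ¬ (x' = 0 ∧ z' = 0) → (p : GaussianInt) ∣ x' - a * z' →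
      hForm x z ≤ hForm x' z' := by
    intro x' z' h1 h2
    have := Nat.find_min' hP (m := (hForm x' z').toNat)
      ⟨x', z', h1, h2, by rw [Int.toNat_of_nonneg (hForm_nonneg _ _)]⟩
    rw [hval]
    have h3 := hForm_nonneg x' z'
    omega
  refine ⟨x, z, hxz, hdvd, ?_⟩
  have hpos := hForm_pos hxz
  obtain ⟨t, ht⟩ := hdvd
  have hx : x = a * z + p * t := by linear_combination ht
  -- a minimal vector is primitive
  have hcop : IsCoprime z t := by
    rw [← EuclideanDomain.gcd_isUnit_iff]
    obtain ⟨z1, hz1⟩ := EuclideanDomain.gcd_dvd_left z t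
    obtain ⟨t1, ht1⟩ := EuclideanDomain.gcd_dvd_right z t
    set g := EuclideanDomain.gcd z t
    have hx1 : x = g * (a * z1 + p * t1) := by rw [hx, hz1, ht1]; ring
    have hne : ¬ (a * z1 + p * t1 = 0 ∧ z1 = 0) := by
      rintro ⟨h1, h2⟩
      exact hxz ⟨by rw [hx1, h1, mul_zero], by rw [hz1, h2, mul_zero]⟩
    have h1 := hmin _ _ hne ⟨t1, by ring⟩
    have h2 := hForm_pos hne
    have h3 : hForm x z = g.norm * hForm (a * z1 + p * t1) z1 := by
      conv_lhs => rw [hx1, hz1]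
      exact hForm_mul _ _ _
    have h4 := GaussianInt.norm_nonneg g
    have h5 : g.norm ≤ 1 := by
      by_contra hc
      push Not at hc
      nlinarith
    have h6 : g.norm ≠ 0 := by
      intro h; rw [h, zero_mul] at h3; omega
    rw [← Zsqrtd.norm_eq_one_iff]
    omega
  obtain ⟨r, w, hrw⟩ := hcop
  -- complete to a basis and size-reduce the second vector
  let z2 : GaussianInt := -w
  let x2 : GaussianInt := a * z2 + p * r
  obtain ⟨q, hq⟩ := exists_round (2 * x2 * star x + 3 * z2 * star z) hpos
  let x3 := x2 - q * x
  let z3 := z2 - q * z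
  have hdet : x * z3 - z * x3 = -(p : GaussianInt) := by
    simp only [x3, z3, x2, z2, hx]
    linear_combination (-(p : GaussianInt)) * hrw
  have hne3 : ¬ (x3 = 0 ∧ z3 = 0) := by
    rintro ⟨h1, h2⟩
    rw [h1, h2] at hdet
    simp [hp0] at hdet
  have hmem : (p : GaussianInt) ∣ x3 - a * z3 := by
    refine ⟨r - q * t, ?_⟩
    simp only [x3, z3, x2, z2, hx]
    ring
  have hle := hmin x3 z3 hne3 hmem
  have hlag := hForm_lagrange x z x3 z3
  have hnorm : x * star x = (x.norm : GaussianInt) := (Zsqrtd.norm_eq_mul_conj x).symm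
  have hnormz : z * star z = (z.norm : GaussianInt) := (Zsqrtd.norm_eq_mul_conj z).symm
  have hinner : 2 * x3 * star x + 3 * z3 * star z =
      2 * x2 * star x + 3 * z2 * star z - q * (hForm x z : GaussianInt) := by
    simp only [x3, z3, hForm]
    push_cast
    linear_combination (-2 * q) * hnorm - 3 * q * hnormz
  have hpn : (-(p : GaussianInt)).norm = (p : ℤ) ^ 2 := by
    rw [gauss_norm]; simp
  rw [hinner, hdet, hpn] at hlag
  nlinarith

/-! ### Solving `x² - (1+i) z² = i p` -/

/-- The element `1 + i` of `ℤ[i]`. -/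
def onePlusI : GaussianInt := ⟨1, 1⟩

/-- The element `i` of `ℤ[i]`. -/
def gaussI : GaussianInt := ⟨0, 1⟩

lemma gaussI_sq : gaussI ^ 2 = -1 := by decide

lemma onePlusI_eq : onePlusI = 1 + gaussI := by decide

lemma norm_form_le (x z : GaussianInt) :
    4 * (x ^ 2 - onePlusI * z ^ 2).norm ≤ hForm x z ^ 2 := by
  have hx := GaussianInt.norm_nonneg x
  have hz := GaussianInt.norm_nonneg z
  -- `r = -Re(x² · conj((1+i) z²))`, of absolute value at most `√2 |x|² |z|²`
  obtain ⟨r, hr⟩ : ∃ r, r = -(x ^ 2 * star (onePlusI * z ^ 2)).re := ⟨_, rfl⟩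
  have h1 : (x ^ 2 - onePlusI * z ^ 2).norm = x.norm ^ 2 + 2 * z.norm ^ 2 + 2 * r := by
    rw [hr]
    simp only [gauss_norm, onePlusI, pow_two, Zsqrtd.re_mul, Zsqrtd.im_mul,
      Zsqrtd.re_sub, Zsqrtd.im_sub, Zsqrtd.re_star, Zsqrtd.im_star]
    ring
  have h2 : r ^ 2 + (x ^ 2 * star (onePlusI * z ^ 2)).im ^ 2 = 2 * (x.norm * z.norm) ^ 2 := by
    rw [hr]
    simp only [gauss_norm, onePlusI, pow_two, Zsqrtd.re_mul, Zsqrtd.im_mul,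
      Zsqrtd.re_star, Zsqrtd.im_star]
    ring
  have h3 : 2 * r ≤ 3 * (x.norm * z.norm) := by
    apply le_of_sq_le_sq
    · nlinarith [sq_nonneg (x ^ 2 * star (onePlusI * z ^ 2)).im, sq_nonneg (x.norm * z.norm)]
    · positivity
  rw [h1, hForm]
  nlinarith [sq_nonneg z.norm]

lemma form_ne_zero {x z : GaussianInt} (h : ¬ (x = 0 ∧ z = 0)) : x ^ 2 - onePlusI * z ^ 2 ≠ 0 := by
  intro h0
  have h1 : (x ^ 2).norm = (onePlusI * z ^ 2).norm := by rw [sub_eq_zero.mp h0]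
  have ho : onePlusI.norm = 2 := by decide
  simp only [pow_two, Zsqrtd.norm_mul, ho] at h1
  have hz : z.norm = 0 := by
    by_contra hz
    have hs : IsSquare (2 : ℚ) := by
      refine ⟨x.norm / z.norm, ?_⟩
      have : (z.norm : ℚ) ≠ 0 := by exact_mod_cast hz
      field_simp
      have h1' : (x.norm * x.norm : ℚ) = 2 * (z.norm * z.norm) := by exact_mod_cast h1
      linarith
    have : IsSquare (2 : ℤ) := by
      have := Rat.isSquare_intCast_iff (z := 2)
      exact this.mp (by exact_mod_cast hs)
    exact Int.prime_two.irreducible.not_isSquare this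
  rw [hz] at h1
  have hx : x.norm = 0 := by simpa using h1
  exact h ⟨GaussianInt.norm_eq_zero.mp hx, GaussianInt.norm_eq_zero.mp hz⟩

/-- `i p` is a relative norm from `ℤ[i][√(1+i)]`. Short vectors give `x² - (1+i) z² = m p` with
`|m|² ≤ 3`, hence `m` is a unit or `1 + i` times a unit; as `i`, `-1` and `-(1+i)` are themselves
relative norms, `m` can be replaced by `i`. -/
lemma exists_form_eq {p : ℕ} (hp : 0 < p) {c d : ℤ} (h1 : (p : ℤ) ∣ c ^ 2 - d ^ 2 - 1)
    (h2 : (p : ℤ) ∣ 2 * (c * d) - 1) :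
    ∃ x z : GaussianInt, x ^ 2 - onePlusI * z ^ 2 = gaussI * p := by
  obtain ⟨x, z, hne, ⟨t, ht⟩, hle⟩ := exists_short p hp ⟨c, d⟩
  have hm : ∃ m : GaussianInt, x ^ 2 - onePlusI * z ^ 2 = m * p := by
    obtain ⟨u, hu⟩ := h1
    obtain ⟨v, hv⟩ := h2
    have ha : (⟨c, d⟩ : GaussianInt) ^ 2 - onePlusI = p * ⟨u, v⟩ := by
      rw [pow_two]
      ext
      · simp [onePlusI]; linarith
      · simp [onePlusI]; linarith
    refine ⟨t * (x + ⟨c, d⟩ * z) + ⟨u, v⟩ * z ^ 2, ?_⟩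
    linear_combination (x + ⟨c, d⟩ * z) * ht + z ^ 2 * ha
  obtain ⟨m, hm⟩ := hm
  have hpp : (0 : ℤ) < (p : ℤ) ^ 2 := by positivity
  have hmn : m.norm ≤ 3 := by
    have h3 := norm_form_le x z
    have h4 : (m * (p : GaussianInt)).norm = m.norm * (p : ℤ) ^ 2 := by
      rw [Zsqrtd.norm_mul, gauss_norm (p : GaussianInt)]; simp
    rw [hm, h4] at h3
    by_contra hc
    push Not at hc
    nlinarith
  have hm0 : m ≠ 0 := by
    rintro rfl
    rw [zero_mul] at hm
    exact form_ne_zero hne hm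
  have hg := gaussI_sq
  have ho := onePlusI_eq
  -- the three moves on `m`
  have neg : ∀ n : GaussianInt, (∃ x z, x ^ 2 - onePlusI * z ^ 2 = n * p) →
      ∃ x z, x ^ 2 - onePlusI * z ^ 2 = -n * p := by
    rintro n ⟨x, z, h⟩
    exact ⟨gaussI * x, gaussI * z, by linear_combination gaussI ^ 2 * h + n * p * hg⟩
  have muli : ∀ n : GaussianInt, (∃ x z, x ^ 2 - onePlusI * z ^ 2 = n * p) →
      ∃ x z, x ^ 2 - onePlusI * z ^ 2 = gaussI * n * p := by
    rintro n ⟨x, z, h⟩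
    refine ⟨gaussI * (x + onePlusI * z), gaussI * (x + z), ?_⟩
    have : onePlusI * gaussI ^ 2 - gaussI ^ 2 = -gaussI := by rw [ho]; linear_combination gaussI * hg
    linear_combination gaussI * h - (x ^ 2 - onePlusI * z ^ 2) * this
  have div : ∀ n : GaussianInt, (∃ x z, x ^ 2 - onePlusI * z ^ 2 = onePlusI * n * p) →
      ∃ x z, x ^ 2 - onePlusI * z ^ 2 = -n * p := by
    rintro n ⟨x, z, h⟩
    have hpr : Prime onePlusI := by
      rw [← irreducible_iff_prime]
      refine ⟨by rw [← Zsqrtd.norm_eq_one_iff]; decide, ?_⟩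
      intro a b hab
      have hN : a.norm * b.norm = 2 := by
        rw [← Zsqrtd.norm_mul, ← hab]; decide
      rw [← Zsqrtd.norm_eq_one_iff, ← Zsqrtd.norm_eq_one_iff]
      have h2 : a.norm.natAbs * b.norm.natAbs = 2 := by
        rw [← Int.natAbs_mul, hN]; rfl
      rcases (Nat.dvd_prime Nat.prime_two).mp ⟨_, h2.symm⟩ with h3 | h3
      · exact Or.inl h3
      · right; rw [h3] at h2; omega
    obtain ⟨y, rfl⟩ : onePlusI ∣ x := hpr.dvd_of_dvd_pow (n := 2) ⟨n * p + z ^ 2, by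
      linear_combination h⟩
    refine ⟨z, y, mul_left_cancel₀ hpr.ne_zero ?_⟩
    linear_combination -h
  have key : ∀ n : GaussianInt, n = 1 ∨ n = -1 ∨ n = gaussI ∨ n = -gaussI →
      (∃ x z, x ^ 2 - onePlusI * z ^ 2 = n * p) → ∃ x z, x ^ 2 - onePlusI * z ^ 2 = gaussI * p := by
    rintro n (rfl | rfl | rfl | rfl) h
    · simpa using muli _ h
    · simpa using muli _ (neg _ h)
    · exact h
    · simpa using neg _ h
  have hcases : (m = 1 ∨ m = -1 ∨ m = gaussI ∨ m = -gaussI) ∨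
      (m = onePlusI * 1 ∨ m = onePlusI * (-1) ∨ m = onePlusI * gaussI ∨ m = onePlusI * (-gaussI)) := by
    rw [gauss_norm] at hmn
    obtain ⟨m1, m2⟩ := m
    simp only at hmn
    have a1 : m1 ≤ 1 := by nlinarith
    have a2 : -1 ≤ m1 := by nlinarith
    have b1 : m2 ≤ 1 := by nlinarith
    have b2 : -1 ≤ m2 := by nlinarith
    clear hm key div muli neg
    interval_cases m1 <;> interval_cases m2 <;> revert hm0 <;> decide
  rcases hcases with h | h
  · exact key m h ⟨x, z, hm⟩
  · rcases h with rfl | rfl | rfl | rfl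
    · exact key _ (by simp) (div _ ⟨x, z, hm⟩)
    · exact key _ (by simp) (div _ ⟨x, z, hm⟩)
    · exact key _ (by simp) (div _ ⟨x, z, hm⟩)
    · exact key _ (by simp) (div _ ⟨x, z, hm⟩)

lemma norm_odd_of_form_eq {p : ℕ} (hp : p % 2 = 1) {x z : GaussianInt}
    (h : x ^ 2 - onePlusI * z ^ 2 = gaussI * p) : Odd z.norm := by
  have h1 := congrArg Zsqrtd.im h
  simp [pow_two, onePlusI, gaussI] at h1
  rw [gauss_norm, ← Int.not_even_iff_odd]
  rintro ⟨t, ht⟩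
  have : (p : ℤ) = 2 * (x.re * x.im - z.re * z.im - t + z.im ^ 2) := by linarith
  omega

lemma coprime_of_form_eq {p : ℕ} (hp : p.Prime) (hp2 : p ≠ 2) {x z : GaussianInt}
    (h : x ^ 2 - onePlusI * z ^ 2 = gaussI * p) : IsCoprime x z := by
  classical
  rw [← EuclideanDomain.gcd_isUnit_iff, ← Zsqrtd.norm_eq_one_iff]
  obtain ⟨x1, hx1⟩ := EuclideanDomain.gcd_dvd_left x z
  obtain ⟨z1, hz1⟩ := EuclideanDomain.gcd_dvd_right x z
  set g := EuclideanDomain.gcd x z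
  obtain ⟨w, hw⟩ : ∃ w, g ^ 2 * w = gaussI * p := ⟨x1 ^ 2 - onePlusI * z1 ^ 2, by
    rw [← h, hx1, hz1]; ring⟩
  have hn : g.norm ^ 2 * w.norm = (p : ℤ) ^ 2 := by
    have := congrArg Zsqrtd.norm hw
    rw [pow_two, Zsqrtd.norm_mul, Zsqrtd.norm_mul, Zsqrtd.norm_mul, gauss_norm (p : GaussianInt)]
      at this
    simpa [gaussI, Zsqrtd.norm_def, pow_two] using this
  have hg0 := GaussianInt.norm_nonneg g
  have hdvd : g.norm.natAbs ∣ p := by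
    rw [← Nat.pow_dvd_pow_iff two_ne_zero]
    zify
    rw [sq_abs]
    exact ⟨_, hn.symm⟩
  rcases (Nat.dvd_prime hp).mp hdvd with h1 | h1
  · exact h1
  exfalso
  have hgp : g.norm = p := by omega
  have hp0 : (p : ℤ) ^ 2 ≠ 0 := by have := hp.pos; positivity
  have hw1 : w.norm = 1 := by
    rw [hgp] at hn
    exact mul_left_cancel₀ hp0 (by rw [hn, mul_one])
  have hww : w * star w = 1 := by rw [← Zsqrtd.norm_eq_mul_conj, hw1]; rfl
  -- `g² = v p` with `v` a unit, so `g²` is real or purely imaginary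
  have hv : g ^ 2 = (gaussI * star w) * p := by
    linear_combination star w * hw - g ^ 2 * hww
  set v := gaussI * star w with hvdef
  have hvn : v.norm = 1 := by
    rw [hvdef, Zsqrtd.norm_mul, Zsqrtd.norm_conj, hw1]; rfl
  have hre := congrArg Zsqrtd.re hv
  have him := congrArg Zsqrtd.im hv
  simp [pow_two] at hre him
  rw [gauss_norm] at hvn hgp
  have hpne := hp.ne_zero
  have hv0 : v.re = 0 ∨ v.im = 0 := by
    by_contra hc
    push Not at hc
    have : 0 < v.re ^ 2 := by have := hc.1; positivity
    have : 0 < v.im ^ 2 := by have := hc.2; positivity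
    omega
  rcases hv0 with h0 | h0
  · rw [h0] at hre
    have : (p : ℤ) = 2 * g.im ^ 2 := by linarith
    have h2 : 2 ∣ p := by zify; exact ⟨_, this⟩
    exact hp2 ((Nat.prime_dvd_prime_iff_eq Nat.prime_two hp).mp h2).symm
  · rw [h0] at him
    have h3 : g.re * g.im = 0 := by linarith
    have hsq : IsSquare (p : ℤ) := by
      rcases mul_eq_zero.mp h3 with h4 | h4
      · exact ⟨g.im, by rw [← hgp, h4]; ring⟩
      · exact ⟨g.re, by rw [← hgp, h4]; ring⟩
    exact (Nat.prime_iff_prime_int.mp hp).irreducible.not_isSquare hsq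

/-! ### Nonprincipality of `H` -/

lemma sqrt_two_p_sq (p : ℕ) : ((Real.sqrt (2 * p) : ℝ) : ℂ) ^ 2 = 2 * p := by
  have : (Real.sqrt (2 * p)) ^ 2 = 2 * p := Real.sq_sqrt (by positivity)
  exact_mod_cast this

lemma sqrt_mem (p : ℕ) : ((Real.sqrt (2 * p) : ℝ) : ℂ) ∈ kfield p :=
  IntermediateField.subset_adjoin _ _ (by simp)

lemma I_mem (p : ℕ) : Complex.I ∈ kfield p :=
  IntermediateField.subset_adjoin _ _ (by simp)

lemma kfield_form (p : ℕ) {x : ℂ} (hx : x ∈ kfield p) :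
    ∃ q₀ q₁ q₂ q₃ : ℚ, x = (q₀ + q₁ * (Real.sqrt (2 * p) : ℝ)) +
      (q₂ + q₃ * (Real.sqrt (2 * p) : ℝ)) * Complex.I := by
  have hs := sqrt_two_p_sq p
  set s : ℂ := ((Real.sqrt (2 * p) : ℝ) : ℂ) with hsdef
  have halg : ∀ x ∈ ({s, Complex.I} : Set ℂ), IsAlgebraic ℚ x := by
    rintro x hx
    simp only [Set.mem_insert_iff, Set.mem_singleton_iff] at hx
    rcases hx with rfl | rfl
    · exact (integral_of_pow_rat two_ne_zero (q := 2 * p) (by push_cast; exact hs)).isAlgebraic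
    · exact (integral_of_pow_rat two_ne_zero (q := -1) (by simp [Complex.I_sq])).isAlgebraic
  have hx' : x ∈ Algebra.adjoin ℚ ({s, Complex.I} : Set ℂ) := by
    rw [← IntermediateField.adjoin_toSubalgebra_of_isAlgebraic halg]
    exact hx
  have hI := Complex.I_sq
  clear hx
  induction hx' using Algebra.adjoin_induction with
  | mem x hx =>
    simp only [Set.mem_insert_iff, Set.mem_singleton_iff] at hx
    rcases hx with rfl | rfl
    · exact ⟨0, 1, 0, 0, by simp⟩
    · exact ⟨0, 0, 1, 0, by simp⟩
  | algebraMap r => exact ⟨r, 0, 0, 0, by simp⟩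
  | add x y _ _ h1 h2 =>
    obtain ⟨a, b, c, d, rfl⟩ := h1
    obtain ⟨a', b', c', d', rfl⟩ := h2
    exact ⟨a + a', b + b', c + c', d + d', by push_cast; ring⟩
  | mul x y _ _ h1 h2 =>
    obtain ⟨a, b, c, d, rfl⟩ := h1
    obtain ⟨a', b', c', d', rfl⟩ := h2
    refine ⟨a * a' + 2 * p * (b * b') - (c * c' + 2 * p * (d * d')),
      a * b' + b * a' - (c * d' + d * c'),
      a * c' + 2 * p * (b * d') + (c * a' + 2 * p * (d * b')),
      a * d' + b * c' + (c * b' + d * a'), ?_⟩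
    push_cast
    linear_combination (b * b' - d * d' + (b * d' + d * b') * Complex.I) * hs
      + (c + d * s) * (c' + d' * s) * hI

/-- The field `ℚ(√(2p))`, in coordinates. -/
abbrev QF (p : ℕ) : Type := QuadraticAlgebra ℚ (2 * p : ℚ) 0

/-- The embedding of `ℚ(√(2p))` into `ℂ` that sends the generator to the positive root. -/
def evalQF (p : ℕ) : QF p →ₐ[ℚ] ℂ :=
  QuadraticAlgebra.lift ⟨((Real.sqrt (2 * p) : ℝ) : ℂ), by
    rw [← pow_two, sqrt_two_p_sq]; simp [Algebra.smul_def]⟩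

lemma evalQF_apply (p : ℕ) (w : QF p) :
    evalQF p w = w.re + w.im * (Real.sqrt (2 * p) : ℝ) := by
  simp [evalQF, QuadraticAlgebra.lift, Algebra.smul_def]

lemma irrational_sqrt_two_p {p : ℕ} (hp : p.Prime) (hp2 : p ≠ 2) :
    Irrational (Real.sqrt (2 * p)) := by
  have : ((2 * p : ℕ) : ℝ) = 2 * p := by push_cast; rfl
  rw [← this, irrational_sqrt_natCast_iff]
  rintro ⟨r, hr⟩
  have h2 : 2 ∣ r := by
    have : 2 ∣ r * r := ⟨p, hr.symm⟩
    rcases Nat.prime_two.dvd_mul.mp this with h | h <;> exact h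
  obtain ⟨t, rfl⟩ := h2
  have : p = 2 * (t * t) := by linarith
  exact hp2 ((Nat.prime_dvd_prime_iff_eq Nat.prime_two hp).mp ⟨_, this⟩).symm

lemma evalQF_injective {p : ℕ} (hp : p.Prime) (hp2 : p ≠ 2) :
    Function.Injective (evalQF p) := by
  rw [injective_iff_map_eq_zero]
  intro w hw
  rw [evalQF_apply] at hw
  have hw' : (w.re : ℝ) + w.im * Real.sqrt (2 * p) = 0 := by exact_mod_cast hw
  have him : w.im = 0 := by
    by_contra him
    apply irrational_sqrt_two_p hp hp2
    refine ⟨-w.re / w.im, ?_⟩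
    have : (w.im : ℝ) ≠ 0 := by exact_mod_cast him
    push_cast
    field_simp
    linarith
  rw [him] at hw'
  ext
  · simpa using hw'
  · simpa using him

lemma integral_trace_norm {p : ℕ} (hp : p.Prime) (hp2 : p ≠ 2) {w : QF p}
    (hw : IsIntegral ℤ (evalQF p w)) :
    (∃ A : ℤ, (A : ℚ) = 2 * w.re) ∧ ∃ N : ℤ, (N : ℚ) = w.norm := by
  have h1 : IsIntegral ℤ w :=
    (isIntegral_algHom_iff ((evalQF p).restrictScalars ℤ) (evalQF_injective hp hp2)).mp hw
  have h2 : IsIntegral ℤ (star w) :=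
    h1.map ((starRingEnd (QF p)).toIntAlgHom)
  have inj : Function.Injective (algebraMap ℚ (QF p)) :=
    QuadraticAlgebra.algebraMap_injective
  constructor
  · have h3 : IsIntegral ℤ (algebraMap ℚ (QF p) (QuadraticAlgebra.trace w)) := by
      rw [QuadraticAlgebra.algebraMap_trace_eq_add_star]
      exact h1.add h2
    obtain ⟨A, hA⟩ := IsIntegrallyClosed.isIntegral_iff.mp ((isIntegral_algebraMap_iff inj).mp h3)
    exact ⟨A, by simpa [QuadraticAlgebra.trace_def] using hA⟩
  · have h3 : IsIntegral ℤ (algebraMap ℚ (QF p) (QuadraticAlgebra.norm w)) := by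
      rw [QuadraticAlgebra.algebraMap_norm_eq_mul_star]
      exact h1.mul h2
    obtain ⟨A, hA⟩ := IsIntegrallyClosed.isIntegral_iff.mp ((isIntegral_algebraMap_iff inj).mp h3)
    exact ⟨A, by simpa using hA⟩

/-- `x x̄` is a totally nonnegative element of `ℚ(√(2p))`. -/
lemma exists_relNorm (p : ℕ) {x : ℂ} (hx : x ∈ kfield p) :
    ∃ w : QF p, evalQF p w = x * (starRingEnd ℂ) x ∧ 0 ≤ w.norm := by
  obtain ⟨a, b, c, d, rfl⟩ := kfield_form p hx
  refine ⟨⟨a, b⟩ * ⟨a, b⟩ + ⟨c, d⟩ * ⟨c, d⟩, ?_, ?_⟩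
  · rw [map_add, map_mul, map_mul, evalQF_apply, evalQF_apply]
    simp only [map_add, map_mul, Complex.conj_ofReal, Complex.conj_I, map_ratCast]
    linear_combination ((c + d * ((Real.sqrt (2 * p) : ℝ) : ℂ)) ^ 2) * Complex.I_sq
  · have hs : (Real.sqrt (2 * p)) ^ 2 = 2 * p := Real.sq_sqrt (by positivity)
    set s := Real.sqrt (2 * p)
    have key : ((QuadraticAlgebra.norm
        ((⟨a, b⟩ * ⟨a, b⟩ + ⟨c, d⟩ * ⟨c, d⟩ : QF p)) : ℚ) : ℝ) =
        ((a + b * s) ^ 2 + (c + d * s) ^ 2) * ((a - b * s) ^ 2 + (c - d * s) ^ 2) := by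
      simp only [QuadraticAlgebra.norm_def, QuadraticAlgebra.re_add, QuadraticAlgebra.im_add,
        QuadraticAlgebra.re_mul, QuadraticAlgebra.im_mul]
      push_cast
      rw [← hs]
      ring
    have : (0 : ℝ) ≤ ((QuadraticAlgebra.norm
        ((⟨a, b⟩ * ⟨a, b⟩ + ⟨c, d⟩ * ⟨c, d⟩ : QF p)) : ℚ) : ℝ) := by
      rw [key]; positivity
    exact_mod_cast this

lemma int_of_two_p_mul_sq {p : ℕ} (hp : p.Prime) (hp2 : p ≠ 2) {B : ℚ} {n : ℤ}
    (h : 2 * p * B ^ 2 = n) : ∃ m : ℤ, (m : ℚ) = B := by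
  have hBint : IsIntegral ℤ (2 * p * B) := by
    apply IsIntegral.of_pow (n := 2) two_pos
    have : (2 * p * B) ^ 2 = ((2 * p * n : ℤ) : ℚ) := by push_cast; rw [← h]; ring
    rw [this]
    exact isIntegral_algebraMap (x := (2 * p * n : ℤ))
  obtain ⟨c, hc⟩ := IsIntegrallyClosed.isIntegral_iff.mp hBint
  have hc' : (c : ℚ) = 2 * p * B := by simpa using hc
  have hcn : c ^ 2 = 2 * p * n := by
    have : (c : ℚ) ^ 2 = 2 * p * n := by rw [hc', ← h]; ring
    exact_mod_cast this
  have hd2 : (2 : ℤ) ∣ c := Int.prime_two.dvd_of_dvd_pow (n := 2) ⟨p * n, by rw [hcn]; ring⟩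
  have hdp : (p : ℤ) ∣ c :=
    (Nat.prime_iff_prime_int.mp hp).dvd_of_dvd_pow (n := 2) ⟨2 * n, by rw [hcn]; ring⟩
  have hcop : IsCoprime (2 : ℤ) p := by
    have := (Nat.coprime_primes Nat.prime_two hp).mpr (Ne.symm hp2)
    exact_mod_cast Nat.isCoprime_iff_coprime.mpr this
  obtain ⟨m, hm⟩ := hcop.mul_dvd hd2 hdp
  refine ⟨m, ?_⟩
  have hp0 : (p : ℚ) ≠ 0 := by exact_mod_cast hp.ne_zero
  have : (c : ℚ) = 2 * p * m := by rw [hm]; push_cast; ring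
  have h3 : (2 * p : ℚ) * m = 2 * p * B := by rw [← this, hc']
  exact mul_left_cancel₀ (by positivity) h3

/-- If `h² = ε (1 + i)` with `ε` a unit, then `h h̄ ∈ ℤ[√(2p)]` is totally positive of norm `2`,
which is impossible for `p ≡ 9 (mod 16)`. -/
lemma not_sq_eq_unit_mul {p : ℕ} (hp : p.Prime) (hp16 : p % 16 = 9) {h e e' : ℂ}
    (hh : h ∈ kfield p) (he : e ∈ kfield p) (he' : e' ∈ kfield p)
    (ih : IsIntegral ℤ h) (ie : IsIntegral ℤ e) (ie' : IsIntegral ℤ e') (hee : e * e' = 1)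
    (heq : h ^ 2 = e * (1 + Complex.I)) : False := by
  have hp2 : p ≠ 2 := by rintro rfl; omega
  have conjint : ∀ {x : ℂ}, IsIntegral ℤ x → IsIntegral ℤ (x * (starRingEnd ℂ) x) := fun hx =>
    hx.mul (hx.map (starRingEnd ℂ).toIntAlgHom)
  obtain ⟨w, hw, hw0⟩ := exists_relNorm p hh
  obtain ⟨u, hu, hu0⟩ := exists_relNorm p he
  obtain ⟨u', hu', hu0'⟩ := exists_relNorm p he'
  obtain ⟨⟨A, hA⟩, N, hN⟩ := integral_trace_norm hp hp2 (w := w) (by rw [hw]; exact conjint ih)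
  obtain ⟨-, U, hU⟩ := integral_trace_norm hp hp2 (w := u) (by rw [hu]; exact conjint ie)
  obtain ⟨-, U', hU'⟩ := integral_trace_norm hp hp2 (w := u') (by rw [hu']; exact conjint ie')
  have inj := evalQF_injective hp hp2
  have huu : u * u' = 1 := by
    apply inj
    rw [map_mul, hu, hu', map_one]
    have := congrArg (starRingEnd ℂ) hee
    rw [map_mul, map_one] at this
    linear_combination (e * e') * this + hee
  have hww : w * w = 2 * u := by
    apply inj
    rw [map_mul, map_mul, hw, hu, map_ofNat]
    have := congrArg (starRingEnd ℂ) heq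
    simp only [map_mul, map_pow, map_add, map_one, Complex.conj_I] at this
    linear_combination (h ^ 2) * this + (starRingEnd ℂ) e * (1 - Complex.I) * heq
      - e * (starRingEnd ℂ) e * Complex.I_sq
  have hn1 := congrArg QuadraticAlgebra.norm huu
  have hn2 := congrArg QuadraticAlgebra.norm hww
  have h2n : QuadraticAlgebra.norm (2 : QF p) = 4 := by
    have := QuadraticAlgebra.norm_natCast (R := ℚ) (a := 2 * p) (b := 0) 2
    norm_num at this
    exact this
  rw [map_mul, map_one, ← hU, ← hU'] at hn1
  rw [map_mul, map_mul, h2n, ← hU, ← hN] at hn2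
  have hn1' : U * U' = 1 := by exact_mod_cast hn1
  have hn2' : N * N = 4 * U := by exact_mod_cast hn2
  have hUnn : 0 ≤ U := by rw [← hU] at hu0; exact_mod_cast hu0
  have hNnn : 0 ≤ N := by rw [← hN] at hw0; exact_mod_cast hw0
  have hU1 : U = 1 := by
    rcases Int.isUnit_iff.mp (IsUnit.of_mul_eq_one _ hn1') with h | h <;> omega
  have hN2 : N = 2 := by nlinarith
  rw [QuadraticAlgebra.norm_def, hN2] at hN
  -- coordinates `A / 2` and `B / 2` of `h h̄`
  obtain ⟨B, hB⟩ := int_of_two_p_mul_sq hp hp2 (B := 2 * w.im) (n := A ^ 2 - 8) (by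
    push_cast; rw [hA]; push_cast at hN; linear_combination 4 * hN)
  have hAB : A ^ 2 - 2 * p * B ^ 2 = 8 := by
    have : (A : ℚ) ^ 2 - 2 * p * B ^ 2 = 8 := by
      rw [hA, hB]; push_cast at hN; linear_combination -4 * hN
    exact_mod_cast this
  have hpo : ¬ (2 : ℤ) ∣ p := by omega
  obtain ⟨A', rfl⟩ : (2 : ℤ) ∣ A :=
    Int.prime_two.dvd_of_dvd_pow (n := 2) ⟨4 + p * B ^ 2, by linarith⟩
  have hB2 : (2 : ℤ) ∣ B := by
    have : (2 : ℤ) ∣ p * B ^ 2 := ⟨A' ^ 2 - 2, by linarith⟩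
    rcases Int.prime_two.dvd_mul.mp this with h | h
    · exact absurd h hpo
    · exact Int.prime_two.dvd_of_dvd_pow h
  obtain ⟨B', rfl⟩ := hB2
  obtain ⟨A'', rfl⟩ : (2 : ℤ) ∣ A' :=
    Int.prime_two.dvd_of_dvd_pow (n := 2) ⟨1 + p * B' ^ 2, by linarith⟩
  exact no_sol_two_sq_sub_mul_sq hp16 A'' B' (by linarith)

/-! ### `[H]` is a square -/

/-- If `B B' = J²` with `B`, `B'` coprime, then `B` is the square of the gcd of `B` and `J`. -/
lemma sup_sq_eq_of_mul_eq_sq {R : Type*} [CommRing R] {B B' J : Ideal R} (hBB : B * B' = J ^ 2)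
    (hBcop : B ⊔ B' = ⊤) : (B ⊔ J) ^ 2 = B := by
  simp only [← Ideal.add_eq_sup] at hBcop ⊢
  have idem : ∀ I : Ideal R, I + I = I := fun I => by rw [Ideal.add_eq_sup, sup_idem]
  calc (B + J) ^ 2 = B * B + (B * J + B * J) + J ^ 2 := by ring
    _ = B * ((B + B') + J) := by rw [idem, ← hBB]; ring
    _ = B := by rw [hBcop, Ideal.add_eq_sup, top_sup_eq, Ideal.mul_top]

/-- In a Dedekind domain over `ℤ[i]` containing `ω = √(ip)`, a solution of `x² - (1+i) z² = i p`
gives `(x - ω) = H A²`: the ideals `(x - ω)/H` and `(x + ω)/H` are coprime with product `(z)²`. -/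
lemma exists_ideal_sq {R : Type*} [CommRing R] [IsDedekindDomain R]
    (φ : GaussianInt →+* R) {p : ℕ} {ω : R} (hω : ω ^ 2 = φ (gaussI * p))
    {x z : GaussianInt} (hxz : x ^ 2 - onePlusI * z ^ 2 = gaussI * p) (hodd : Odd z.norm)
    (hcop : IsCoprime x z) {H : Ideal R} (hHpr : H.IsPrime) (hH : H ^ 2 = Ideal.span {φ onePlusI})
    (hH0 : H ≠ ⊥) : ∃ A : Ideal R, H * A ^ 2 = Ideal.span {φ x - ω} := by
  have hprod : (φ x - ω) * (φ x + ω) = φ onePlusI * φ z ^ 2 := by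
    have := congrArg φ hxz
    rw [map_sub, map_mul, map_pow, map_pow] at this
    linear_combination this - hω
  have hopi : φ onePlusI ∈ H := by
    have : φ onePlusI ∈ H ^ 2 := by rw [hH]; exact Ideal.mem_span_singleton_self _
    exact Ideal.pow_le_self two_ne_zero this
  have h2 : (2 : R) ∈ H := by
    have : (2 : R) = φ onePlusI * φ ⟨1, -1⟩ := by
      rw [← map_mul]
      have : onePlusI * ⟨1, -1⟩ = 2 := by decide
      rw [this, map_ofNat]
    rw [this]
    exact H.mul_mem_right _ hopi
  have hmem : φ x - ω ∈ H ∧ φ x + ω ∈ H := by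
    have h3 : (φ x - ω) * (φ x + ω) ∈ H := by rw [hprod]; exact H.mul_mem_right _ hopi
    have h4 : 2 * ω ∈ H := H.mul_mem_right _ h2
    rcases hHpr.mem_or_mem h3 with h | h
    · refine ⟨h, ?_⟩
      have : φ x + ω = (φ x - ω) + 2 * ω := by ring
      rw [this]; exact H.add_mem h h4
    · refine ⟨?_, h⟩
      have : φ x - ω = (φ x + ω) - 2 * ω := by ring
      rw [this]; exact H.sub_mem h h4
  obtain ⟨B, hB⟩ := Ideal.dvd_span_singleton.mpr hmem.1
  obtain ⟨B', hB'⟩ := Ideal.dvd_span_singleton.mpr hmem.2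
  have hBB : B * B' = Ideal.span {φ z} ^ 2 := by
    have h5 : H ^ 2 * (B * B') = H ^ 2 * Ideal.span {φ z} ^ 2 := by
      calc H ^ 2 * (B * B') = (H * B) * (H * B') := by ring
        _ = H ^ 2 * Ideal.span {φ z} ^ 2 := by
          rw [← hB, ← hB', hH, Ideal.span_singleton_mul_span_singleton, hprod,
            Ideal.span_singleton_pow, Ideal.span_singleton_mul_span_singleton]
    exact mul_left_cancel₀ (pow_ne_zero 2 hH0) h5
  have hBcop : B ⊔ B' = ⊤ := by
    by_contra hne
    obtain ⟨Q, hQ, hle⟩ := Ideal.exists_le_maximal _ hne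
    have hQp := hQ.isPrime
    have hBQ : B ≤ Q := le_sup_left.trans hle
    have hBQ' : B' ≤ Q := le_sup_right.trans hle
    have m1 : φ x - ω ∈ Q := by
      have : φ x - ω ∈ H * B := by rw [← hB]; exact Ideal.mem_span_singleton_self _
      exact hBQ (Ideal.mul_le_right this)
    have m2 : φ x + ω ∈ Q := by
      have : φ x + ω ∈ H * B' := by rw [← hB']; exact Ideal.mem_span_singleton_self _
      exact hBQ' (Ideal.mul_le_right this)
    have mz : φ z ∈ Q := by
      have : φ z ^ 2 ∈ B * B' := by
        rw [hBB, Ideal.span_singleton_pow]; exact Ideal.mem_span_singleton_self _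
      exact hQp.mem_of_pow_mem 2 (hBQ (Ideal.mul_le_left this))
    have m2x : 2 * φ x ∈ Q := by
      have : 2 * φ x = (φ x - ω) + (φ x + ω) := by ring
      rw [this]; exact Q.add_mem m1 m2
    apply hQp.ne_top
    rw [Ideal.eq_top_iff_one]
    rcases hQp.mem_or_mem m2x with m | m
    · obtain ⟨n, hn⟩ := hodd
      have h6 : φ z * φ (star z) = 2 * (n : R) + 1 := by
        rw [← map_mul, ← Zsqrtd.norm_eq_mul_conj, hn, map_intCast]
        push_cast
        ring
      have h7 : (1 : R) = φ z * φ (star z) - 2 * (n : R) := by rw [h6]; ring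
      rw [h7]
      exact Q.sub_mem (Q.mul_mem_right _ mz) (Q.mul_mem_right _ m)
    · obtain ⟨r, t, hrt⟩ := hcop
      rw [← map_one φ, ← hrt, map_add, map_mul, map_mul]
      exact Q.add_mem (Q.mul_mem_left _ m) (Q.mul_mem_left _ mz)
  exact ⟨B ⊔ Ideal.span {φ z}, by rw [sup_sq_eq_of_mul_eq_sq hBB hBcop, hB]⟩

/-- The two ideal-theoretic facts behind the theorem; the second says `[H] [A]² = 1`. -/
lemma statement_aux {p : ℕ} (hp : p.Prime) (hp8 : p % 8 = 1) (hp16 : p % 16 = 9)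
    (h2p4 : (2 : ZMod p) ^ ((p - 1) / 4) = -1)
    (H : Ideal (𝓞 (kfield p))) (hHpr : H.IsPrime)
    (α : 𝓞 (kfield p)) (hα : ((α : kfield p) : ℂ) = 1 + Complex.I)
    (hH : H ^ 2 = Ideal.span {α}) (hH0 : H ≠ ⊥) :
    ¬ H.IsPrincipal ∧
      ∃ (A : Ideal (𝓞 (kfield p))) (β : 𝓞 (kfield p)), β ≠ 0 ∧ H * A ^ 2 = Ideal.span {β} := by
  have hp2 : p ≠ 2 := by rintro rfl; omega
  have inj : ∀ a b : 𝓞 (kfield p), ((a : kfield p) : ℂ) = ((b : kfield p) : ℂ) → a = b :=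
    fun a b h => RingOfIntegers.ext (Subtype.ext h)
  have intC : ∀ a : 𝓞 (kfield p), IsIntegral ℤ ((a : kfield p) : ℂ) := fun a =>
    (RingOfIntegers.isIntegral_coe a).map ((algebraMap (kfield p) ℂ).toIntAlgHom)
  constructor
  · rintro ⟨h, hh⟩
    have hh' : H = Ideal.span {h} := hh
    rw [hh', Ideal.span_singleton_pow, Ideal.span_singleton_eq_span_singleton] at hH
    obtain ⟨u, hu⟩ := hH.symm
    refine not_sq_eq_unit_mul hp hp16 (h := ((h : kfield p) : ℂ))
      (e := (((u : 𝓞 (kfield p)) : kfield p) : ℂ))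
      (e' := (((↑(u⁻¹) : 𝓞 (kfield p)) : kfield p) : ℂ))
      (Subtype.mem _) (Subtype.mem _) (Subtype.mem _) (intC _) (intC _) (intC _) ?_ ?_
    · have := congrArg (fun a : 𝓞 (kfield p) => ((a : kfield p) : ℂ)) u.mul_inv
      simp only [map_mul, map_one, IntermediateField.coe_mul, IntermediateField.coe_one] at this
      exact this
    · have := congrArg (fun a : 𝓞 (kfield p) => ((a : kfield p) : ℂ)) hu
      simp only [map_mul, map_pow, IntermediateField.coe_mul, IntermediateField.coe_pow, hα] at this
      rw [← this, mul_comm]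
  · have hI : IsIntegral ℤ (⟨Complex.I, I_mem p⟩ : kfield p) := by
      apply IsIntegral.of_pow (n := 2) two_pos
      have : (⟨Complex.I, I_mem p⟩ : kfield p) ^ 2 = -1 := by
        apply Subtype.ext; simp
      rw [this]
      exact isIntegral_one.neg
    obtain ⟨ι, hιC⟩ : ∃ ι : 𝓞 (kfield p), ((ι : kfield p) : ℂ) = Complex.I :=
      ⟨⟨⟨Complex.I, I_mem p⟩, hI⟩, rfl⟩
    have hι : ι * ι = ((-1 : ℤ) : 𝓞 (kfield p)) := by
      apply inj
      simp [hιC]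
    obtain ⟨φ, hφι⟩ : ∃ φ : GaussianInt →+* 𝓞 (kfield p),
        ∀ g, φ g = (g.re : 𝓞 (kfield p)) + g.im * ι := ⟨Zsqrtd.lift ⟨ι, hι⟩, fun _ => rfl⟩
    have hφ : ∀ g : GaussianInt, ((φ g : kfield p) : ℂ) = g.re + g.im * Complex.I := by
      intro g
      rw [hφι]
      simp [hιC]
    -- `ω = (1 + i) √(2p) / 2`, a square root of `i p`
    let ωk : kfield p := (1 + ⟨Complex.I, I_mem p⟩) * ⟨_, sqrt_mem p⟩ / 2
    have hωC : (ωk : ℂ) ^ 2 = Complex.I * p := by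
      have hs := sqrt_two_p_sq p
      simp only [ωk, IntermediateField.coe_div, IntermediateField.coe_mul,
        IntermediateField.coe_add, IntermediateField.coe_one]
      have h2 : ((2 : kfield p) : ℂ) = 2 := rfl
      rw [h2]
      linear_combination ((1 + Complex.I) ^ 2 / 4) * hs + (p / 2 : ℂ) * Complex.I_sq
    have hωk : ωk ^ 2 = ((φ (gaussI * p) : 𝓞 (kfield p)) : kfield p) := by
      apply Subtype.ext
      rw [hφ, IntermediateField.coe_pow, hωC]
      simp [gaussI]
      ring
    have hωint : IsIntegral ℤ ωk := by
      apply IsIntegral.of_pow (n := 2) two_pos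
      rw [hωk]
      exact RingOfIntegers.isIntegral_coe _
    obtain ⟨ω, hωω⟩ : ∃ ω : 𝓞 (kfield p), (ω : kfield p) = ωk := ⟨⟨ωk, hωint⟩, rfl⟩
    have hω : ω ^ 2 = φ (gaussI * p) :=
      RingOfIntegers.ext (by rw [← hωω, ← map_pow] at hωk; exact hωk)
    have hαφ : α = φ onePlusI := by
      apply inj
      rw [hα, hφ]
      simp [onePlusI]
    have hodd8 : Odd ((p - 1) / 8) := by rw [Nat.odd_iff]; omega
    obtain ⟨c, d, h1, h2⟩ := exists_sqrt_one_add_i hp hp8 h2p4 hodd8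
    obtain ⟨x, z, hxz⟩ := exists_form_eq hp.pos h1 h2
    have hodd := norm_odd_of_form_eq (by omega) hxz
    have hcop := coprime_of_form_eq hp hp2 hxz
    rw [hαφ] at hH
    obtain ⟨A, hA⟩ := exists_ideal_sq φ hω hxz hodd hcop hHpr hH hH0
    refine ⟨A, φ x - ω, ?_, hA⟩
    intro h0
    have h3 : φ onePlusI * φ z ^ 2 = 0 := by
      have := congrArg φ hxz
      rw [map_sub, map_mul, map_pow, map_pow] at this
      linear_combination (φ x + ω) * h0 - this + hω
    have h4 : φ onePlusI ≠ 0 := by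
      intro h
      rw [h] at hH
      exact pow_ne_zero 2 hH0 (by rw [hH]; simp)
    have h5 : φ z = 0 := by simpa [h4] using h3
    have h6 : ((z.norm : ℤ) : 𝓞 (kfield p)) = 0 := by
      rw [← map_intCast φ, Zsqrtd.norm_eq_mul_conj, map_mul, h5, zero_mul]
    have h7 : z.norm = 0 := by exact_mod_cast h6
    rw [h7] at hodd
    exact absurd hodd (by decide)

theorem statement_19 (p : ℕ) (hp : p.Prime) (hp8 : p % 8 = 1)
    (h2p4 : (2 : ZMod p) ^ ((p - 1) / 4) = -1)
    (hp24 : (-1 : ℤ) ^ ((p - 1) / 8) = -1)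
    -- H is the prime of O_k above 1 + i :
    (H : Ideal (𝓞 (kfield p))) (hHpr : H.IsPrime)
    (α : 𝓞 (kfield p)) (hα : ((α : kfield p) : ℂ) = 1 + Complex.I)
    (hH : H ^ 2 = Ideal.span {α})
    (h0 : H ∈ (Ideal (𝓞 (kfield p)))⁰) :
    orderOf (ClassGroup.mk0 ⟨H, h0⟩) = 2 ∧
    ∃ σ : ClassGroup (𝓞 (kfield p)), orderOf σ = 4 ∧ σ ^ 2 = ClassGroup.mk0 ⟨H, h0⟩ := by
  have hodd8 : Odd ((p - 1) / 8) := by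
    rw [← Nat.not_even_iff_odd]
    intro he
    rw [he.neg_one_pow] at hp24
    norm_num at hp24
  have hp16 : p % 16 = 9 := by
    rw [Nat.odd_iff] at hodd8
    omega
  have hH0 : H ≠ ⊥ := nonZeroDivisors.ne_zero h0
  obtain ⟨hnp, A, β, hβ, hA⟩ := statement_aux hp hp8 hp16 h2p4 H hHpr α hα hH hH0
  have hA0 : A ∈ (Ideal (𝓞 (kfield p)))⁰ := by
    apply mem_nonZeroDivisors_of_ne_zero
    rintro rfl
    apply hβ
    rw [← Ideal.span_singleton_eq_bot, ← hA]
    simp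
  have hne : ClassGroup.mk0 ⟨H, h0⟩ ≠ 1 := by
    rw [Ne, ClassGroup.mk0_eq_one_iff]
    exact hnp
  have hsq : ClassGroup.mk0 ⟨H, h0⟩ ^ 2 = 1 := by
    rw [← map_pow]
    exact (ClassGroup.mk0_eq_one_iff (I := H ^ 2) (pow_mem h0 2)).mpr ⟨α, hH⟩
  have hσ : (ClassGroup.mk0 ⟨A, hA0⟩)⁻¹ ^ 2 = ClassGroup.mk0 ⟨H, h0⟩ := by
    rw [inv_pow, eq_comm, eq_inv_iff_mul_eq_one, ← map_pow, ← map_mul]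
    exact (ClassGroup.mk0_eq_one_iff (I := H * A ^ 2) (mul_mem h0 (pow_mem hA0 2))).mpr ⟨β, hA⟩
  refine ⟨orderOf_eq_prime hsq hne, _, ?_, hσ⟩
  refine orderOf_eq_prime_pow (p := 2) (n := 1) ?_ ?_
  · rw [pow_one, hσ]; exact hne
  · rw [show 2 ^ (1 + 1) = 2 * 2 from rfl, pow_mul, hσ, hsq]
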